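/- arXiv:1909.04987 — 3 statements merged into one kernel-verified Lean document; each statement's English description precedes it below -/
import Mathlib

section
/- Let S be a profinite semigroup with only finitely many regular J-classes. Then there exists a continuous homomorphism φ : S → T onto a finite semigroup T such that, for every idempotent e of T, the closed subsemigroup φ⁻¹(e) is a pro-LG semigroup. -/
/-- A bundled finite semigroup. -/
structure FinSgp : Type 1 where
  carrier : Type
  [str : Semigroup carrier]
  [fin : Finite carrier]

attribute [instance] FinSgp.str FinSgp.fin

/-- Finite semigroups carry the discrete topology. -/
instance (T : FinSgp) : TopologicalSpace T.carrier := ⊥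

instance (T : FinSgp) : DiscreteTopology T.carrier := ⟨rfl⟩

/-- A pseudovariety of finite semigroups: a class of finite semigroups closed under
homomorphic images, (isomorphic copies of) subsemigroups, and binary direct products. -/
def IsPseudovariety (V : Set FinSgp) : Prop :=
  (∀ S ∈ V, ∀ (T : FinSgp) (f : S.carrier →ₙ* T.carrier), Function.Surjective f → T ∈ V) ∧
  (∀ S ∈ V, ∀ (T : FinSgp) (f : T.carrier →ₙ* S.carrier), Function.Injective f → T ∈ V) ∧
  (∀ S ∈ V, ∀ T ∈ V, (FinSgp.mk (S.carrier × T.carrier)) ∈ V)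

/-- A profinite semigroup: a compact, Hausdorff, totally disconnected topological semigroup. -/
def IsProfiniteSgp (S : Type) [Semigroup S] [TopologicalSpace S] : Prop :=
  ContinuousMul S ∧ CompactSpace S ∧ T2Space S ∧ TotallyDisconnectedSpace S

/-- A pro-V semigroup: a profinite semigroup whose points are separated by continuous
homomorphisms onto finite semigroups belonging to V. -/
def IsProV (V : Set FinSgp) (S : Type) [Semigroup S] [TopologicalSpace S] : Prop :=
  IsProfiniteSgp S ∧ ∀ x y : S, x ≠ y →
    ∃ (T : FinSgp) (f : S →ₙ* T.carrier),
      T ∈ V ∧ Continuous f ∧ Function.Surjective f ∧ f x ≠ f y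

/-- `A` topologically generates the topological semigroup `S`. -/
def TopGen (S : Type) [Semigroup S] [TopologicalSpace S] (A : Set S) : Prop :=
  closure ((Subsemigroup.closure A : Subsemigroup S) : Set S) = Set.univ

/-- A topological semigroup is locally countable if every closed subsemigroup
topologically generated by a finite subset is countable. -/
def IsLocCountable (S : Type) [Semigroup S] [TopologicalSpace S] : Prop :=
  ∀ A : Set S, A.Finite →
    (closure ((Subsemigroup.closure A : Subsemigroup S) : Set S)).Countable

/-- A pseudovariety is locally countable if every pro-V semigroup is locally countable. -/
def PVLocallyCountable (V : Set FinSgp) : Prop :=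
  ∀ (S : Type) [Semigroup S] [TopologicalSpace S], IsProV V S → IsLocCountable S

/-- A pseudovariety is locally finite if every finitely generated pro-V semigroup is finite. -/
def PVLocallyFinite (V : Set FinSgp) : Prop :=
  ∀ (S : Type) [Semigroup S] [TopologicalSpace S], IsProV V S →
    (∃ A : Set S, A.Finite ∧ TopGen S A) → Finite S

/-- The join of two pseudovarieties: the smallest pseudovariety containing both. -/
def PVJoin (V W : Set FinSgp) : Set FinSgp :=
  ⋂₀ {U | IsPseudovariety U ∧ V ⊆ U ∧ W ⊆ U}

/-- The preimage of an idempotent under a semigroup homomorphism, as a subsemigroup. -/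
def idemFiber {S T : Type} [Semigroup S] [Semigroup T] (f : S →ₙ* T)
    (e : T) (he : e * e = e) : Subsemigroup S where
  carrier := f ⁻¹' {e}
  mul_mem' := fun {a b} ha hb => by
    simp only [Set.mem_preimage, Set.mem_singleton_iff] at ha hb ⊢
    rw [map_mul, ha, hb, he]

/-- A subsemigroup of a finite semigroup, as a bundled finite semigroup. -/
def subFinSgp {S : Type} [Semigroup S] [Finite S] (T : Subsemigroup S) : FinSgp :=
  FinSgp.mk T

/-- The generators of the Mal'cev product `V ⓜ W`: finite semigroups `S` admitting a
homomorphism onto some `T ∈ W` whose fibers over idempotents lie in `V`. -/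
def MalcevWitness (V W : Set FinSgp) (S : FinSgp) : Prop :=
  ∃ (T : FinSgp) (f : S.carrier →ₙ* T.carrier), T ∈ W ∧
    ∀ (e : T.carrier) (he : e * e = e), subFinSgp (idemFiber f e he) ∈ V

/-- The Mal'cev product of two pseudovarieties: the smallest pseudovariety containing
all its generators. -/
def Malcev (V W : Set FinSgp) : Set FinSgp :=
  ⋂₀ {U | IsPseudovariety U ∧ ∀ S : FinSgp, MalcevWitness V W S → S ∈ U}

/-- Green's preorder `≤_L`. -/
def lLE {S : Type} [Semigroup S] (u v : S) : Prop := u = v ∨ ∃ x, u = x * v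

/-- Green's relation `L`. -/
def GreenL {S : Type} [Semigroup S] (u v : S) : Prop := lLE u v ∧ lLE v u

/-- Green's preorder `≤_J`. -/
def jLE {S : Type} [Semigroup S] (u v : S) : Prop :=
  u = v ∨ (∃ x, u = v * x) ∨ (∃ x, u = x * v) ∨ (∃ x y, u = x * v * y)

/-- Green's relation `J`. -/
def GreenJ {S : Type} [Semigroup S] (u v : S) : Prop := jLE u v ∧ jLE v u

/-- A regular element of a semigroup. -/
def IsRegularElt {S : Type} [Semigroup S] (s : S) : Prop := ∃ t, s = s * t * s

/-- `S` has only finitely many regular `J`-classes. -/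
def FinManyRegJ (S : Type) [Semigroup S] : Prop :=
  ∃ F : Set S, F.Finite ∧ ∀ s : S, IsRegularElt s → ∃ t ∈ F, GreenJ s t

/-- A subgroup of a semigroup: a subsemigroup which is a group under the induced
multiplication. -/
def IsSgpSubgroup (S : Type) [Semigroup S] (G : Set S) : Prop :=
  (∀ x ∈ G, ∀ y ∈ G, x * y ∈ G) ∧
  ∃ e ∈ G, (∀ x ∈ G, e * x = x ∧ x * e = x) ∧ (∀ x ∈ G, ∃ y ∈ G, x * y = e ∧ y * x = e)

/-- A group element of a semigroup: an element lying in some subgroup. -/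
def IsGroupElt (S : Type) [Semigroup S] (s : S) : Prop :=
  ∃ G : Set S, IsSgpSubgroup S G ∧ s ∈ G

/-- `prodFrom f n` is the product `f 0 * f 1 * ⋯ * f n`. -/
def prodFrom {S : Type} [Semigroup S] (f : ℕ → S) : ℕ → S
  | 0 => f 0
  | n + 1 => prodFrom f n * f (n + 1)

/-- A semigroup is nilpotent if it has a zero element and some length bound beyond
which all products equal zero. -/
def IsNilpotentSgp (S : Type) [Semigroup S] : Prop :=
  ∃ z : S, (∀ x : S, z * x = z ∧ x * z = z) ∧ ∃ n : ℕ, ∀ f : ℕ → S, prodFrom f n = z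

/-- The pseudovariety `N` of finite nilpotent semigroups. -/
def NPv : Set FinSgp := {S | IsNilpotentSgp S.carrier}

/-- A semigroup which is a group. -/
def IsGroupSgp (S : Type) [Semigroup S] : Prop :=
  ∃ e : S, (∀ x : S, e * x = x ∧ x * e = x) ∧ ∀ x : S, ∃ y : S, x * y = e ∧ y * x = e

/-- The pseudovariety `LG` of finite local groups: `eSe` is a group for each idempotent `e`. -/
def LG : Set FinSgp :=
  {S | ∀ e : S.carrier, e * e = e → ∀ s : S.carrier,
      ∃ t : S.carrier, (e * s * e) * (e * t * e) = e ∧ (e * t * e) * (e * s * e) = e}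

/-- The pseudovariety `IE` of finite semigroups with exactly one idempotent. -/
def IE : Set FinSgp := {S | ∃! e : S.carrier, e * e = e}

/-- A bundled topological semigroup (carrier, multiplication, topology). -/
structure TopSgp : Type 1 where
  carrier : Type
  [str : Semigroup carrier]
  [top : TopologicalSpace carrier]

attribute [instance] TopSgp.str TopSgp.top

/-- The fiber of a relational morphism over an idempotent, as a subsemigroup of the
domain. -/
def relFiber {S T : Type} [Semigroup S] [Semigroup T] (μ : Subsemigroup (S × T))
    (e : T) (he : e * e = e) : Subsemigroup S where
  carrier := {s | (s, e) ∈ μ}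
  mul_mem' := fun {a b} ha hb => by
    have h := μ.mul_mem ha hb
    simpa [Prod.mk_mul_mk, he] using h

/-- `spow x n = x ^ (n + 1)` in a semigroup. -/
def spow {S : Type} [Semigroup S] (x : S) : ℕ → S
  | 0 => x
  | n + 1 => spow x n * x

/-- The pseudovariety `A ∩ ESl` of finite aperiodic semigroups with commuting idempotents. -/
def AESl : Set FinSgp :=
  {S | (∃ n : ℕ, ∀ x : S.carrier, spow x (n + 1) = spow x n) ∧
       (∀ e f : S.carrier, e * e = e → f * f = f → e * f = f * e)}


theorem jLE_iff_exists_withOne {S : Type} [Semigroup S] {u v : S} :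
    jLE u v ↔ ∃ a b : WithOne S, (u : WithOne S) = a * v * b := by
  constructor
  · rintro (h | ⟨x, h⟩ | ⟨x, h⟩ | ⟨x, y, h⟩)
    · exact ⟨1, 1, by simp [h]⟩
    · exact ⟨1, x, by simp [h]⟩
    · exact ⟨x, 1, by simp [h]⟩
    · exact ⟨x, y, by simp [h]⟩
  · rintro ⟨a, b, h⟩
    induction a using WithOne.recOneCoe with
    | one =>
      induction b using WithOne.recOneCoe with
      | one => exact Or.inl (WithOne.coe_inj.1 (by simpa using h))
      | coe y => exact Or.inr (Or.inl ⟨y, WithOne.coe_inj.1 (by simpa using h)⟩)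
    | coe x =>
      induction b using WithOne.recOneCoe with
      | one => exact Or.inr (Or.inr (Or.inl ⟨x, WithOne.coe_inj.1 (by simpa using h)⟩))
      | coe y => exact Or.inr (Or.inr (Or.inr ⟨x, y, WithOne.coe_inj.1 (by simpa using h)⟩))

theorem jLE.trans {S : Type} [Semigroup S] {u v w : S} (huv : jLE u v) (hvw : jLE v w) :
    jLE u w := by
  rw [jLE_iff_exists_withOne] at *
  obtain ⟨a, b, h⟩ := huv
  obtain ⟨c, d, h'⟩ := hvw
  exact ⟨a * c, d * b, by rw [h, h']; simp only [mul_assoc]⟩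

/-- Below an idempotent, a divisor relation can be witnessed by genuine elements of `S`. -/
theorem jLE.exists_mul_mul {S : Type} [Semigroup S] {u v : S} (h : jLE u v) (hv : v * v = v) :
    ∃ x y, u = x * v * y := by
  rcases h with h | ⟨x, h⟩ | ⟨x, h⟩ | h
  · exact ⟨v, v, by rw [hv, hv, h]⟩
  · exact ⟨v, x, by rw [hv, h]⟩
  · exact ⟨x, v, by rw [mul_assoc, hv, h]⟩
  · exact h

theorem jLE.exists_con {S : Type} [Semigroup S] (c : Con S) {s e f : S} (h : jLE s e)
    (hc : c e f) : ∃ w, c s w ∧ jLE w f := by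
  rcases h with rfl | ⟨x, rfl⟩ | ⟨x, rfl⟩ | ⟨x, y, rfl⟩
  · exact ⟨f, hc, Or.inl rfl⟩
  · exact ⟨f * x, c.mul hc (c.refl x), Or.inr (Or.inl ⟨x, rfl⟩)⟩
  · exact ⟨x * f, c.mul (c.refl x) hc, Or.inr (Or.inr (Or.inl ⟨x, rfl⟩))⟩
  · exact ⟨x * f * y, c.mul (c.mul (c.refl x) hc) (c.refl y),
      Or.inr (Or.inr (Or.inr ⟨x, y, rfl⟩))⟩

theorem isClosed_setOf_jLE {S : Type} [Semigroup S] [TopologicalSpace S] [ContinuousMul S]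
    [CompactSpace S] [T2Space S] (v : S) : IsClosed {u | jLE u v} := by
  have h : {u | jLE u v} = {v} ∪ (Set.range (fun x => v * x) ∪ (Set.range (fun x => x * v) ∪
      Set.range (fun p : S × S => p.1 * v * p.2))) := by
    ext u
    simp [jLE, eq_comm]
  rw [h]
  refine isClosed_singleton.union (IsClosed.union ?_ (IsClosed.union ?_ ?_)) <;>
    exact (isCompact_range (by fun_prop)).isClosed

/-- A continuous two-variable map into a space with a clopen set, with compact parameter space:
membership in the clopen set is locally constant, uniformly in the parameter. -/
theorem eventually_forall_mem_iff {X Y Z : Type*} [TopologicalSpace X] [TopologicalSpace Y]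
    [TopologicalSpace Z] [CompactSpace Y] {K : Set Z} (hK : IsClopen K) {g : X → Y → Z}
    (hg : Continuous (Function.uncurry g)) (x : X) :
    ∀ᶠ x' in nhds x, ∀ y, (g x y ∈ K ↔ g x' y ∈ K) := by
  have key : ∀ᶠ x' in nhds x, ∀ y ∈ (Set.univ : Set Y), (g x y ∈ K ↔ g x' y ∈ K) := by
    refine isCompact_univ.eventually_forall_of_forall_eventually fun y _ => ?_
    have hl : Continuous fun p : X × Y => g x p.2 :=
      hg.comp (continuous_const.prodMk continuous_snd)
    have hr : Continuous fun p : X × Y => g p.1 p.2 := hg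
    by_cases h : g x y ∈ K
    · filter_upwards [(hK.isOpen.preimage hl).mem_nhds (show (x, y) ∈ _ from h),
        (hK.isOpen.preimage hr).mem_nhds (show (x, y) ∈ _ from h)] with p h1 h2
      exact iff_of_true h1 h2
    · filter_upwards [(hK.compl.isOpen.preimage hl).mem_nhds (show (x, y) ∈ _ from h),
        (hK.compl.isOpen.preimage hr).mem_nhds (show (x, y) ∈ _ from h)] with p h1 h2
      exact iff_of_false h1 h2
  simpa using key

/-- The syntactic congruence of a subset of a semigroup. -/
def syntacticCon {S : Type*} [Semigroup S] (K : Set S) : Con S where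
  r x y := (x ∈ K ↔ y ∈ K) ∧ (∀ u, x * u ∈ K ↔ y * u ∈ K) ∧ (∀ u, u * x ∈ K ↔ u * y ∈ K) ∧
    ∀ p : S × S, p.1 * x * p.2 ∈ K ↔ p.1 * y * p.2 ∈ K
  iseqv :=
    { refl := fun _ => ⟨Iff.rfl, fun _ => Iff.rfl, fun _ => Iff.rfl, fun _ => Iff.rfl⟩
      symm := fun h => ⟨h.1.symm, fun u => (h.2.1 u).symm, fun u => (h.2.2.1 u).symm,
        fun p => (h.2.2.2 p).symm⟩
      trans := fun h h' => ⟨h.1.trans h'.1, fun u => (h.2.1 u).trans (h'.2.1 u),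
        fun u => (h.2.2.1 u).trans (h'.2.2.1 u), fun p => (h.2.2.2 p).trans (h'.2.2.2 p)⟩ }
  mul' := by
    rintro w x y z ⟨-, h1, -, h2⟩ ⟨-, -, h3, h4⟩
    refine ⟨(h1 y).trans (h3 x), fun u => ?_, fun u => ?_, fun p => ?_⟩
    · have a := h1 (y * u)
      have b := h4 (x, u)
      simp only [← mul_assoc] at a b
      exact a.trans b
    · have a := h2 (u, y)
      have b := h3 (u * x)
      simp only [← mul_assoc] at a b ⊢
      exact a.trans b
    · have a := h2 (p.1, y * p.2)
      have b := h4 (p.1 * x, p.2)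
      simp only [← mul_assoc] at a b ⊢
      exact a.trans b

/-- The syntactic congruence of a clopen subset of a compact semigroup has open classes. -/
theorem isOpen_syntacticCon {S : Type*} [Semigroup S] [TopologicalSpace S] [ContinuousMul S]
    [CompactSpace S] {K : Set S} (hK : IsClopen K) (x : S) :
    IsOpen {y | syntacticCon K x y} := by
  rw [isOpen_iff_mem_nhds]
  intro y hy
  have h0 := eventually_forall_mem_iff hK (g := fun x (_ : Unit) => x) (by fun_prop) y
  have h1 := eventually_forall_mem_iff hK (g := fun x u : S => x * u) (by fun_prop) y
  have h2 := eventually_forall_mem_iff hK (g := fun x u : S => u * x) (by fun_prop) y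
  have h3 := eventually_forall_mem_iff hK (g := fun x (p : S × S) => p.1 * x * p.2)
    (by fun_prop) y
  filter_upwards [h0, h1, h2, h3] with z g0 g1 g2 g3
  exact (syntacticCon K).trans hy ⟨g0 (), g1, g2, g3⟩

/-- In a profinite semigroup, congruences with open classes separate points from closed sets. -/
theorem exists_openCon_separating {S : Type*} [Semigroup S] [TopologicalSpace S]
    [ContinuousMul S] [CompactSpace S] [T2Space S] [TotallyDisconnectedSpace S] {C : Set S}
    (hC : IsClosed C) {x : S} (hx : x ∉ C) :
    ∃ c : Con S, (∀ a, IsOpen {b | c a b}) ∧ ∀ w ∈ C, ¬ c x w := by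
  obtain ⟨K, hK, hxK, hKC⟩ := compact_exists_isClopen_in_isOpen hC.isOpen_compl hx
  exact ⟨syntacticCon K, isOpen_syntacticCon hK, fun w hw h => hKC (h.1.1 hxK) hw⟩

theorem FinSgp.continuous_of_isOpen_fibers {X : Type*} [TopologicalSpace X] (T : FinSgp)
    (f : X → T.carrier) (hf : ∀ a, IsOpen {b | f a = f b}) : Continuous f := by
  refine continuous_def.2 fun s _ => isOpen_iff_mem_nhds.2 fun a ha => ?_
  filter_upwards [(hf a).mem_nhds (show a ∈ {b | f a = f b} from rfl)] with b hb
  exact Set.mem_preimage.2 (hb ▸ ha)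

/-- The quotient of a compact semigroup by a congruence with open classes is finite. -/
theorem exists_finSgp_of_openCon {S : Type} [Semigroup S] [TopologicalSpace S] [CompactSpace S]
    (c : Con S) (hc : ∀ a, IsOpen {b | c a b}) :
    ∃ (T : FinSgp) (f : S →ₙ* T.carrier), Continuous f ∧ Function.Surjective f ∧
      ∀ a b, f a = f b ↔ c a b := by
  have hq (q : DiscreteQuotient S) : Finite q := inferInstance
  have hfin : Finite c.Quotient := hq { toSetoid := c.toSetoid, isOpen_setOfPred_rel := hc }
  refine ⟨FinSgp.mk c.Quotient, ⟨fun a => (a : c.Quotient), fun _ _ => rfl⟩, ?_,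
    Quotient.mk_surjective, fun a b => c.eq⟩
  refine FinSgp.continuous_of_isOpen_fibers _ _ fun a => ?_
  convert hc a using 3
  exact c.eq

/-- In a compact semigroup, an idempotent below a `J`-equivalent idempotent is equal to it. -/
theorem idempotent_eq_of_jLE {S : Type} [Semigroup S] [TopologicalSpace S] [ContinuousMul S]
    [CompactSpace S] [T2Space S] {f g : S} (hg : g * g = g) (hfg : f * g = g)
    (hgf : g * f = g) (h : jLE f g) : g = f := by
  obtain ⟨x, y, hxy⟩ := h.exists_mul_mul hg
  let P : Set (S × Sᵐᵒᵖ) := {p | p.1 * f * p.2.unop = f ∧ g * p.2.unop = p.2.unop}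
  have hPc : IsCompact P := by
    refine IsClosed.isCompact (IsClosed.inter ?_ ?_) <;>
    exact isClosed_eq (by fun_prop) (by fun_prop)
  have hPn : P.Nonempty := by
    refine ⟨(x * g, MulOpposite.op (g * y)), ?_, ?_⟩
    · change x * g * f * (g * y) = f
      rw [mul_assoc x g f, hgf, ← mul_assoc, mul_assoc x g g, hg, ← hxy]
    · change g * (g * y) = g * y
      rw [← mul_assoc, hg]
  obtain ⟨⟨p, q⟩, ⟨h1, h2⟩, h3⟩ := exists_idempotent_in_compact_subsemigroup
    (M := S × Sᵐᵒᵖ) (fun r => by fun_prop) P hPn hPc (by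
      rintro ⟨p, q⟩ ⟨h1, h2⟩ ⟨p', q'⟩ ⟨h1', h2'⟩
      refine ⟨?_, ?_⟩
      · change p * p' * f * (q'.unop * q.unop) = f
        calc _ = p * (p' * f * q'.unop) * q.unop := by simp only [mul_assoc]
          _ = f := by rw [h1', h1]
      · change g * (q'.unop * q.unop) = q'.unop * q.unop
        rw [← mul_assoc, h2'])
  have hq : q.unop * q.unop = q.unop := congrArg (fun r : S × Sᵐᵒᵖ => r.2.unop) h3
  simp only at h1 h2
  have hfq : f * q.unop = f := by
    rw [← h1, mul_assoc _ q.unop, hq]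
  have hf : f = q.unop := by
    rw [← hfq, ← h2, ← mul_assoc, hfg]
  rw [← hgf, hf, h2]

/-- In a compact semigroup with identity `f` whose only idempotent is `f`, every element has a
right inverse. -/
theorem exists_mul_eq_of_idempotent_eq {U : Type*} [Semigroup U] [TopologicalSpace U]
    [ContinuousMul U] [CompactSpace U] [T2Space U] {f : U} (hf : f * f = f)
    (hu : ∀ g : U, g * g = g → f * g = g → g * f = g → g = f) (s : U) :
    ∃ t, f * s * f * (f * t * f) = f := by
  obtain ⟨g, ⟨t, rfl⟩, hg⟩ := exists_idempotent_in_compact_subsemigroup (M := U)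
    (fun r => by fun_prop) (Set.range fun t => f * s * f * (f * t * f)) ⟨_, f, rfl⟩
    (isCompact_range (by fun_prop)) (by
      rintro _ ⟨t, rfl⟩ _ ⟨t', rfl⟩
      exact ⟨t * f * f * s * f * f * t', by simp only [mul_assoc]⟩)
  refine ⟨t, hu _ hg ?_ ?_⟩
  · simp only [← mul_assoc, hf]
  · simp only [mul_assoc, hf]

theorem exists_eq_mul_of_idempotent_eq {U : Type*} [Semigroup U] [TopologicalSpace U]
    [ContinuousMul U] [CompactSpace U] [T2Space U] {f : U} (hf : f * f = f)
    (hu : ∀ g : U, g * g = g → f * g = g → g * f = g → g = f) (s : U) :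
    ∃ t, f * s * f * (f * t * f) = f ∧ f * t * f * (f * s * f) = f := by
  obtain ⟨t, ht⟩ := exists_mul_eq_of_idempotent_eq hf hu s
  obtain ⟨r, hr⟩ := exists_mul_eq_of_idempotent_eq hf hu t
  refine ⟨t, ht, ?_⟩
  have : f * s * f = f * r * f := by
    calc f * s * f = f * s * f * f := by rw [mul_assoc _ f f, hf]
      _ = f * s * f * (f * t * f) * (f * r * f) := by
        rw [mul_assoc (f * s * f) (f * t * f), hr]
      _ = f * r * f := by rw [ht]; simp only [← mul_assoc, hf]
  rw [this, hr]

/-- Idempotents lift along surjective continuous homomorphisms from compact semigroups. -/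
theorem exists_idempotent_lift {U T : Type*} [Semigroup U] [TopologicalSpace U]
    [ContinuousMul U] [CompactSpace U] [T2Space U] [Semigroup T] [TopologicalSpace T]
    [T1Space T] (p : U →ₙ* T) (hp : Continuous p) (hs : Function.Surjective p) {e : T}
    (he : e * e = e) : ∃ f : U, f * f = f ∧ p f = e := by
  obtain ⟨f, hf, hff⟩ := exists_idempotent_in_compact_subsemigroup (M := U)
    (fun r => by fun_prop) (p ⁻¹' {e}) (hs e) (isClosed_singleton.preimage hp).isCompact (by
      intro a ha b hb
      simp only [Set.mem_preimage, Set.mem_singleton_iff] at ha hb ⊢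
      rw [map_mul, ha, hb, he])
  exact ⟨f, hff, hf⟩

/-- A profinite semigroup in which distinct idempotents are never comparable is pro-`LG`. -/
theorem isProV_LG_of_idempotent_eq {U : Type} [Semigroup U] [TopologicalSpace U]
    (hU : IsProfiniteSgp U)
    (hu : ∀ f g : U, f * f = f → g * g = g → f * g = g → g * f = g → g = f) :
    IsProV LG U := by
  obtain ⟨_, _, _, _⟩ := id hU
  refine ⟨hU, fun x y hxy => ?_⟩
  obtain ⟨c, hc, hsep⟩ := exists_openCon_separating (isClosed_singleton (x := y))
    (x := x) (by simpa using hxy)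
  obtain ⟨T, p, hp, hs, hpc⟩ := exists_finSgp_of_openCon c hc
  refine ⟨T, p, fun e he s => ?_, hp, hs, fun h => hsep y rfl ((hpc x y).1 h)⟩
  obtain ⟨f, hf, rfl⟩ := exists_idempotent_lift p hp hs he
  obtain ⟨s, rfl⟩ := hs s
  obtain ⟨t, ht, ht'⟩ := exists_eq_mul_of_idempotent_eq hf (fun g => hu f g hf) s
  exact ⟨p t, by simp only [← map_mul, ht], by simp only [← map_mul, ht']⟩

/-- In a profinite semigroup with finitely many regular `J`-classes, some congruence with open
classes identifies only those idempotents that are `J`-equivalent. -/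
theorem FinManyRegJ.exists_openCon {S : Type} [Semigroup S] [TopologicalSpace S]
    [ContinuousMul S] [CompactSpace S] [T2Space S] [TotallyDisconnectedSpace S]
    (hJ : FinManyRegJ S) :
    ∃ c : Con S, (∀ a, IsOpen {b | c a b}) ∧
      ∀ e f : S, e * e = e → f * f = f → c e f → jLE e f := by
  obtain ⟨F, hF, hJ⟩ := hJ
  have : Finite F := hF
  have hsep : ∀ p : S × S, ∃ c : Con S, (∀ a, IsOpen {b | c a b}) ∧
      (¬ jLE p.1 p.2 → ∀ w, jLE w p.2 → ¬ c p.1 w) := by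
    rintro ⟨s, t⟩
    by_cases h : jLE s t
    · refine ⟨⊤, fun a => ?_, fun h' => absurd h h'⟩
      convert isOpen_univ
      exact Set.eq_univ_of_forall fun b => trivial
    · obtain ⟨c, hc, hc'⟩ := exists_openCon_separating (isClosed_setOf_jLE t) (x := s) h
      exact ⟨c, hc, fun _ => hc'⟩
  choose d hd hd' using hsep
  have hinf : ∀ a b, (⨅ i : F × F, d (i.1, i.2)) a b ↔ ∀ i : F × F, d (i.1, i.2) a b := by
    intro a b
    simp only [Con.coe_iInf, iInf_apply, iInf_Prop_eq]
  refine ⟨⨅ i : F × F, d (i.1, i.2), fun a => ?_, fun e f he hf hef => ?_⟩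
  · simp only [hinf, Set.ofPred_forall]
    exact isOpen_iInter_of_finite fun i => hd _ a
  · obtain ⟨s, hs, hes, hse⟩ := hJ e ⟨e, by rw [he, he]⟩
    obtain ⟨t, ht, hft, htf⟩ := hJ f ⟨f, by rw [hf, hf]⟩
    by_cases hst : jLE s t
    · exact (hes.trans hst).trans htf
    · obtain ⟨w, hw, hwf⟩ := hse.exists_con (d (s, t)) ((hinf e f).1 hef (⟨s, hs⟩, ⟨t, ht⟩))
      exact absurd hw (hd' (s, t) hst w (hwf.trans hft))

/-- A profinite semigroup with finitely many regular `J`-classes admits a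
continuous homomorphism onto a finite semigroup whose fibers over idempotents are
pro-`LG`. -/
theorem finManyRegJ_onto_finite_with_proLG_fibers
    (S : Type) [Semigroup S] [TopologicalSpace S] (hS : IsProfiniteSgp S)
    (hJ : FinManyRegJ S) :
    ∃ (T : FinSgp) (f : S →ₙ* T.carrier), Continuous f ∧ Function.Surjective f ∧
      ∀ (e : T.carrier) (he : e * e = e), IsProV LG ↥(idemFiber f e he) := by
  obtain ⟨_, _, _, _⟩ := hS
  obtain ⟨c, hc, hce⟩ := hJ.exists_openCon
  obtain ⟨T, p, hp, hs, hpc⟩ := exists_finSgp_of_openCon c hc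
  refine ⟨T, p, hp, hs, fun e he => ?_⟩
  have hclosed : IsClosed (p ⁻¹' {e}) := isClosed_singleton.preimage hp
  have : CompactSpace ↥(idemFiber p e he) := isCompact_iff_compactSpace.1 hclosed.isCompact
  refine isProV_LG_of_idempotent_eq ⟨inferInstance, this, inferInstance, inferInstance⟩ ?_
  rintro ⟨f, hfe⟩ ⟨g, hge⟩ hf hg hfg hgf
  simp only [MulMemClass.mk_mul_mk, Subtype.mk.injEq] at hf hg hfg hgf ⊢
  exact idempotent_eq_of_jLE hg hfg hgf (hce f g hf hg ((hpc f g).1 (hfe.trans hge.symm)))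
end

section
/- Let S be a profinite semigroup topologically generated by a finite subset A, and suppose S has only finitely many regular J-classes. Then S equals the subsemigroup generated algebraically (without taking closure) by A together with the set of group elements of S. Moreover, if S has only countably many group elements, then S equals the subsemigroup generated algebraically by A together with the set E(S) of idempotents of S. -/
open Topology Filter Set

section Algebra

variable {S : Type} [Semigroup S]

theorem jLE_iff_withOne {u v : S} :
    jLE u v ↔ ∃ x y : WithOne S, (u : WithOne S) = x * v * y := by
  constructor
  · rintro (rfl | ⟨x, rfl⟩ | ⟨x, rfl⟩ | ⟨x, y, rfl⟩)
    · exact ⟨1, 1, by simp⟩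
    · exact ⟨1, x, by simp⟩
    · exact ⟨x, 1, by simp⟩
    · exact ⟨x, y, by simp⟩
  · rintro ⟨x, y, h⟩
    induction x using WithOne.recOneCoe <;> induction y using WithOne.recOneCoe <;>
      simp only [one_mul, mul_one, ← WithOne.coe_mul, WithOne.coe_inj] at h
    · exact .inl h
    · exact .inr (.inl ⟨_, h⟩)
    · exact .inr (.inr (.inl ⟨_, h⟩))
    · exact .inr (.inr (.inr ⟨_, _, h⟩))

theorem jLE.trans_s9 {u v w : S} (h₁ : jLE u v) (h₂ : jLE v w) : jLE u w := by
  rw [jLE_iff_withOne] at *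
  obtain ⟨x, y, h⟩ := h₁
  obtain ⟨x', y', h'⟩ := h₂
  exact ⟨x * x', y' * y, by simp only [h, h', mul_assoc]⟩

/-- Induction on words by prepending a generator. -/
theorem Subsemigroup.closure_induction_cons {A : Set S} {p : S → Prop} (mem : ∀ a ∈ A, p a)
    (cons : ∀ a ∈ A, ∀ w ∈ Subsemigroup.closure A, p w → p (a * w)) {w : S}
    (hw : w ∈ Subsemigroup.closure A) : p w := by
  suffices h : p w ∧ ∀ z ∈ Subsemigroup.closure A, p z → p (w * z) from h.1
  induction hw using Subsemigroup.closure_induction with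
  | mem a ha => exact ⟨mem a ha, cons a ha⟩
  | mul x y _ hy ihx ihy =>
    refine ⟨ihx.2 y hy ihy.1, fun z hz hpz => ?_⟩
    rw [mul_assoc]
    exact ihx.2 _ (mul_mem hy hz) (ihy.2 z hz hpz)

theorem isGroupElt_of_inverse {e x y : S} (he : e * e = e) (hx₁ : e * x = x) (hx₂ : x * e = x)
    (hy₁ : e * y = y) (hy₂ : y * e = y) (hxy : x * y = e) (hyx : y * x = e) : IsGroupElt S x := by
  refine ⟨{z | e * z = z ∧ z * e = z ∧ ∃ w, e * w = w ∧ w * e = w ∧ z * w = e ∧ w * z = e},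
    ⟨?_, e, ⟨he, he, e, he, he, he, he⟩, fun z hz => ⟨hz.1, hz.2.1⟩, ?_⟩,
    hx₁, hx₂, y, hy₁, hy₂, hxy, hyx⟩
  · rintro z ⟨hz₁, hz₂, w, hw₁, hw₂, hzw, hwz⟩ z' ⟨hz₁', hz₂', w', hw₁', hw₂', hzw', hwz'⟩
    refine ⟨by rw [← mul_assoc, hz₁], by rw [mul_assoc, hz₂'], w' * w, by rw [← mul_assoc, hw₁'],
      by rw [mul_assoc, hw₂], ?_, ?_⟩
    · rw [mul_assoc, ← mul_assoc z', hzw', hw₁, hzw]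
    · rw [mul_assoc, ← mul_assoc w, hwz, hz₁', hwz']
  · rintro z ⟨hz₁, hz₂, w, hw₁, hw₂, hzw, hwz⟩
    exact ⟨w, ⟨hw₁, hw₂, z, hz₁, hz₂, hwz, hzw⟩, hzw, hwz⟩

end Algebra

section CompactSemigroup

theorem exists_idempotent_sandwich {M : Type} [Semigroup M] [TopologicalSpace M] [CompactSpace M]
    [T2Space M] [ContinuousMul M] (Q : Subsemigroup M) (hQ : IsClosed (Q : Set M)) {m : M}
    (hm : m ∈ Q) : ∃ k ∈ Q, m * k * m * (m * k * m) = m * k * m := by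
  obtain ⟨_, ⟨k, hk, rfl⟩, h⟩ := exists_idempotent_in_compact_subsemigroup
    (fun r : M => by fun_prop) ((fun k => m * k * m) '' (Q : Set M)) ⟨_, m, hm, rfl⟩
    (hQ.isCompact.image (by fun_prop)) (by
      rintro _ ⟨k, hk, rfl⟩ _ ⟨l, hl, rfl⟩
      exact ⟨k * m * m * l, mul_mem (mul_mem (mul_mem hk hm) hm) hl, by simp only [mul_assoc]⟩)
  exact ⟨k, hk, h⟩

variable {S : Type} [Semigroup S] [TopologicalSpace S]

omit [Semigroup S] in
theorem exists_idempotent_sandwich_of_fixed {M : Type} [Semigroup M] [TopologicalSpace M]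
    [CompactSpace M] [T2Space M] [ContinuousMul M] [T2Space S] {act : M → S → S}
    (hact : ∀ m n s, act (m * n) s = act m (act n s)) {t : S} (hc : Continuous fun m => act m t)
    {m : M} (hm : act m t = t) : ∃ k, act k t = t ∧ m * k * m * (m * k * m) = m * k * m := by
  let Q : Subsemigroup M :=
    { carrier := {n | act n t = t}
      mul_mem' := fun {a b} (ha : act a t = t) (hb : act b t = t) => by
        rw [mem_ofPred_eq, hact, hb, ha] }
  exact exists_idempotent_sandwich Q (isClosed_eq hc continuous_const) hm

omit [Semigroup S] in
/-- If a point of `S` is approached along an orbit of a compact semigroup, membership in `T`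
propagates from the point to the orbit, provided it does so near idempotents. -/
theorem eventually_orbit_mem {M : Type} [Semigroup M] [TopologicalSpace M]
    [CompactSpace M] [T2Space M] [ContinuousMul M] [T2Space S] {act : M → S → S}
    (hact : ∀ m n s, act (m * n) s = act m (act n s)) {t : S} (hc : Continuous fun m => act m t)
    {T : Set S} (H : ∀ ε : M, ε * ε = ε → ∀ᶠ n in 𝓝 ε, n * ε = n → act n t ∈ T) :
    ∀ᶠ s in 𝓝 t, ∀ m, s = act m t → s ∈ T := by
  have key : ∀ m, act m t = t → m ∈ interior {m | act m t ∈ T} := by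
    intro m hm
    obtain ⟨k, hk, hid⟩ := exists_idempotent_sandwich_of_fixed hact hc hm
    rw [mem_interior_iff_mem_nhds]
    set ε := m * k * m with hε
    have hεt : act ε t = t := by rw [hε, hact, hact, hm, hk, hm]
    have hlim : Tendsto (fun n => n * (k * m * ε)) (𝓝 m) (𝓝 ε) := by
      have h : Continuous fun n : M => n * (k * m * ε) := by fun_prop
      have h' := h.tendsto m
      rwa [show m * (k * m * ε) = ε * ε by simp only [hε, mul_assoc], hid] at h'
    filter_upwards [hlim.eventually (H ε hid)] with n hn
    have h := hn (by simp only [mul_assoc, hid])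
    rwa [hact, hact, hεt, hact, hm, hk] at h
  have hK : IsClosed ((fun m => act m t) '' (interior {m | act m t ∈ T})ᶜ) :=
    (isOpen_interior.isClosed_compl.isCompact.image hc).isClosed
  filter_upwards [hK.isOpen_compl.mem_nhds (by rintro ⟨m, hm, h⟩; exact hm (key m h))]
    with s hs m hsm
  by_contra hsT
  refine hs ⟨m, fun hm => hsT ?_, hsm.symm⟩
  rw [hsm]
  exact interior_subset (s := {m | act m t ∈ T}) hm

variable [ContinuousMul S] [CompactSpace S] [T2Space S]

theorem isClosed_jLE : IsClosed {p : S × S | jLE p.1 p.2} := by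
  have h : {p : S × S | jLE p.1 p.2} = range (fun v : S => (v, v)) ∪
      (range (fun q : S × S => (q.1 * q.2, q.1)) ∪ (range (fun q : S × S => (q.2 * q.1, q.1)) ∪
        range (fun q : S × S × S => (q.2.1 * q.1 * q.2.2, q.1)))) := by
    ext ⟨u, v⟩
    simp only [jLE, mem_ofPred_eq, mem_union, mem_range, Prod.mk.injEq, Prod.exists]
    refine or_congr ?_ (or_congr ?_ (or_congr ?_ ?_)) <;> aesop
  rw [h]
  exact (isCompact_range (by fun_prop)).isClosed.union
    ((isCompact_range (by fun_prop)).isClosed.union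
      ((isCompact_range (by fun_prop)).isClosed.union (isCompact_range (by fun_prop)).isClosed))

theorem isClosed_greenJ (t : S) : IsClosed {x | GreenJ x t} :=
  (isClosed_jLE.preimage (by fun_prop : Continuous fun x : S => (x, t))).inter
    (isClosed_jLE.preimage (by fun_prop : Continuous fun x : S => (t, x)))

theorem exists_mul_eq_of_mul_mul_eq {x y t : S} (h : x * t * y = t) :
    (∃ a, a * x * t = t) ∧ ∃ b, t * (y * b) = t := by
  obtain ⟨k, hk, hid⟩ := exists_idempotent_sandwich_of_fixed (M := S × Sᵐᵒᵖ)
    (act := fun m s => m.1 * s * m.2.unop) (t := t) (m := (x, .op y))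
    (fun m n s => by simp [mul_assoc]) (by fun_prop) h
  have h₁ : x * k.1 * x * (x * k.1 * x) = x * k.1 * x := congrArg Prod.fst hid
  have h₂ : y * k.2.unop * y * (y * k.2.unop * y) = y * k.2.unop * y := by
    simpa [mul_assoc] using congrArg (fun m => m.2.unop) hid
  change k.1 * t * k.2.unop = t at hk
  have h₃ : (x * k.1 * x) * t * (y * k.2.unop * y) = t := by
    calc _ = x * (k.1 * (x * t * y) * k.2.unop) * y := by simp only [mul_assoc]
      _ = t := by rw [h, hk, h]
  have hl : ∀ g g' : S, g * g = g → g * t * g' = t → g * t = t := fun g g' hg hgg' => by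
    rw [← hgg', ← mul_assoc, ← mul_assoc, hg]
  have hr : ∀ g g' : S, g' * g' = g' → g * t * g' = t → t * g' = t := fun g g' hg hgg' => by
    rw [← hgg', mul_assoc, hg]
  exact ⟨⟨x * k.1, hl _ _ h₁ h₃⟩, k.2.unop * y, by rw [← mul_assoc y]; exact hr _ _ h₂ h₃⟩

omit [TopologicalSpace S] [ContinuousMul S] [CompactSpace S] [T2Space S] in
theorem exists_eq_mul_mul_of_jLE {e h : S} (he : e * e = e) (hJ : jLE e h) :
    ∃ x y, e = x * h * y := by
  obtain hJ | ⟨x, hJ⟩ | ⟨x, hJ⟩ | hJ := hJ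
  · exact ⟨e, e, by rw [← hJ, he, he]⟩
  · exact ⟨e, x, by rw [mul_assoc, ← hJ, he]⟩
  · exact ⟨x, e, by rw [← hJ, he]⟩
  · exact hJ

/-- Stability: an idempotent of `eSe` that is `J`-above `e` equals `e`. -/
theorem eq_of_idempotent_of_jLE {e h : S} (he : e * e = e) (hh : h * h = h) (h₁ : e * h = h)
    (h₂ : h * e = h) (hJ : jLE e h) : h = e := by
  obtain ⟨x, y, hxy⟩ := exists_eq_mul_mul_of_jLE he hJ
  obtain ⟨-, b, hb⟩ := exists_mul_eq_of_mul_mul_eq (x := x) (t := e) (y := h * y)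
    (by rw [mul_assoc x, ← mul_assoc e, h₁, ← mul_assoc, ← hxy])
  have hb' : h * (y * b) = e := by rw [← hb, ← mul_assoc, ← mul_assoc, ← mul_assoc, h₁]
  rw [← h₂, ← hb', ← mul_assoc, hh]

theorem exists_mul_right_of_jLE {u v : S} (h : jLE u (u * v)) : ∃ z, u = u * v * z := by
  have key : ∀ x y, u = x * (u * v) * y → ∃ z, u = u * v * z := fun x y h => by
    obtain ⟨-, b, hb⟩ := exists_mul_eq_of_mul_mul_eq (x := x) (t := u) (y := v * y)
      (by rw [← mul_assoc, mul_assoc x, ← h])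
    exact ⟨y * b, by rw [← mul_assoc, mul_assoc u, mul_assoc u, hb]⟩
  obtain h | h | ⟨x, h⟩ | ⟨x, y, h⟩ := h
  · exact ⟨v, by rw [← h, ← h]⟩
  · exact h
  · exact key (x * x) v (by
      calc u = x * (u * v) := h
        _ = x * (x * (u * v) * v) := congrArg (fun z => x * (z * v)) h
        _ = _ := by simp only [mul_assoc])
  · exact key x y h

theorem exists_mul_left_of_jLE {u v : S} (h : jLE v (u * v)) : ∃ z, v = z * (u * v) := by
  have key : ∀ x y, v = x * (u * v) * y → ∃ z, v = z * (u * v) := fun x y h => by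
    obtain ⟨⟨a, ha⟩, -⟩ := exists_mul_eq_of_mul_mul_eq (x := x * u) (t := v) (y := y)
      (by rw [mul_assoc x, ← h])
    exact ⟨a * x, by rw [← mul_assoc, mul_assoc a, ha]⟩
  obtain h | ⟨x, h⟩ | h | ⟨x, y, h⟩ := h
  · exact ⟨u, by rw [← h, ← h]⟩
  · exact key u (x * x) (by
      calc v = u * v * x := h
        _ = u * (u * v * x) * x := congrArg (fun z => u * z * x) h
        _ = _ := by simp only [mul_assoc])
  · exact h
  · exact key x y h

/-- An element that is a product of two elements of its own `J`-class is regular. -/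
theorem isRegularElt_mul {u v : S} (hu : jLE u (u * v)) (hv : jLE v (u * v)) :
    IsRegularElt (u * v) := by
  obtain ⟨z, hz⟩ := exists_mul_right_of_jLE hu
  obtain ⟨z', hz'⟩ := exists_mul_left_of_jLE hv
  refine ⟨z * z', ?_⟩
  calc u * v = (u * v * z) * (z' * (u * v)) := by rw [← hz, ← hz']
    _ = _ := by simp only [mul_assoc]

/-- In a profinite semigroup with finitely many regular `J`-classes, the group of units of `eSe`
is a neighbourhood of `e` in `eSe`. -/
theorem eventually_exists_inverse [TotallyDisconnectedSpace S] (hJ : FinManyRegJ S) {e : S}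
    (he : e * e = e) : ∀ᶠ x in 𝓝 e, e * x = x → x * e = x →
      ∃ y, e * y = y ∧ y * e = y ∧ x * y = e ∧ y * x = e := by
  obtain ⟨F, hF, hFr⟩ := hJ
  have hO : IsOpen (⋂ t ∈ {t ∈ F | ¬ GreenJ e t}, {x | GreenJ x t}ᶜ) :=
    (hF.subset (sep_subset _ _)).isOpen_biInter fun t _ => (isClosed_greenJ t).isOpen_compl
  obtain ⟨N, hN, heN, hNO⟩ := compact_exists_isClopen_in_isOpen hO
    (mem_iInter₂.2 fun t ht => ht.2)
  have hidem : ∀ h ∈ N, h * h = h → e * h = h → h * e = h → h = e := by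
    intro h hhN hh h₁ h₂
    obtain ⟨t, htF, ht⟩ := hFr h ⟨h, by rw [hh, hh]⟩
    have het : GreenJ e t := by
      by_contra hn
      exact mem_iInter₂.1 (hNO hhN) t ⟨htF, hn⟩ ht
    exact eq_of_idempotent_of_jLE he hh h₁ h₂ (het.1.trans_s9 ht.2)
  let Q : Subsemigroup S :=
    { carrier := {q | e * q = q ∧ q * e = q ∧ ∀ u ∈ N, u * e = u → u * q ∈ N}
      mul_mem' := by
        rintro a b ⟨ha₁, ha₂, ha⟩ ⟨hb₁, hb₂, hb⟩
        refine ⟨by rw [← mul_assoc, ha₁], by rw [mul_assoc, hb₂], fun u hu hue => ?_⟩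
        rw [← mul_assoc]
        exact hb _ (ha u hu hue) (by rw [mul_assoc, ha₂]) }
  have hQ : IsClosed (Q : Set S) := by
    refine (isClosed_eq (by fun_prop) (by fun_prop)).inter
      ((isClosed_eq (by fun_prop) (by fun_prop)).inter ?_)
    change IsClosed {q | ∀ u ∈ N, u * e = u → u * q ∈ N}
    simp only [Set.ofPred_forall]
    exact isClosed_iInter fun u => isClosed_iInter fun _ => isClosed_iInter fun _ =>
      hN.isClosed.preimage (by fun_prop)
  have hK : IsCompact {u | u ∈ N ∧ u * e = u} :=
    (hN.isClosed.inter (isClosed_eq (by fun_prop) (by fun_prop))).isCompact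
  have htube : ∀ᶠ x in 𝓝 e, ∀ u ∈ {u | u ∈ N ∧ u * e = u}, u * x ∈ N := by
    refine hK.eventually_forall_of_forall_eventually fun u hu => ?_
    have hc : Continuous fun p : S × S => p.2 * p.1 := by fun_prop
    exact hc.tendsto (e, u) (hN.isOpen.mem_nhds (by simpa only [hu.2] using hu.1))
  filter_upwards [htube] with x hx h₁ h₂
  have hxQ : x ∈ Q := ⟨h₁, h₂, fun u hu hue => hx u ⟨hu, hue⟩⟩
  obtain ⟨k, hk, hid⟩ := exists_idempotent_sandwich Q hQ hxQ
  have hxkx : x * k * x ∈ Q := mul_mem (mul_mem hxQ hk) hxQ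
  have heq : x * k * x = e := by
    refine hidem _ ?_ hid hxkx.1 hxkx.2.1
    have h := hxkx.2.2 e heN he
    rwa [hxkx.1] at h
  have hcomm : k * x = x * k := by
    calc k * x = e * k * x := by rw [hk.1]
      _ = x * k * (x * k * x) := by rw [← heq]; simp only [mul_assoc]
      _ = x * k := by rw [heq, mul_assoc, hk.2.1]
  exact ⟨k * x, by rw [← mul_assoc, hk.1], by rw [mul_assoc, h₂], by rw [← mul_assoc, heq],
    by rw [hcomm, heq]⟩

/-- If moreover there are only countably many group elements, then `e` is isolated in `eSe`. -/
theorem eventually_eq_of_countable [TotallyDisconnectedSpace S] (hJ : FinManyRegJ S)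
    (hG : {s : S | IsGroupElt S s}.Countable) {e : S} (he : e * e = e) :
    ∀ᶠ x in 𝓝 e, e * x = x → x * e = x → x = e := by
  let H : Set S := {x | e * x = x ∧ x * e = x ∧
    ∃ y, e * y = y ∧ y * e = y ∧ x * y = e ∧ y * x = e}
  have hHG : H ⊆ {s : S | IsGroupElt S s} := by
    rintro x ⟨hx₁, hx₂, y, hy₁, hy₂, hxy, hyx⟩
    exact isGroupElt_of_inverse he hx₁ hx₂ hy₁ hy₂ hxy hyx
  have hH : IsCompact H := by
    have hP : IsClosed {p : S × S | (e * p.1 = p.1 ∧ p.1 * e = p.1) ∧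
        (e * p.2 = p.2 ∧ p.2 * e = p.2) ∧ p.1 * p.2 = e ∧ p.2 * p.1 = e} := by
      refine .inter (.inter ?_ ?_) (.inter (.inter ?_ ?_) (.inter ?_ ?_)) <;>
        exact isClosed_eq (by fun_prop) (by fun_prop)
    convert hP.isCompact.image continuous_fst using 1
    ext x
    simp [H, and_assoc]
  have : CompactSpace H := isCompact_iff_compactSpace.1 hH
  have : Countable H := (hG.mono hHG).to_subtype
  have : Nonempty H := ⟨e, he, he, e, he, he, he, he⟩
  obtain ⟨x₀, hx₀⟩ := nonempty_interior_of_iUnion_of_closed (f := fun x : H => {x})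
    (fun x => isClosed_singleton) (iUnion_of_singleton H)
  have hopen : IsOpen ({x₀} : Set H) := by
    rw [← (subset_singleton_iff_eq.1 interior_subset).resolve_left hx₀.ne_empty]
    exact isOpen_interior
  obtain ⟨O, hO, hOx⟩ := isOpen_induced_iff.1 hopen
  obtain ⟨⟨x₀, hx₁, hx₂, y₀, hy₁, hy₂, hxy, hyx⟩, rfl⟩ : ∃ x, x = x₀ := ⟨_, rfl⟩
  have hx₀O : x₀ ∈ O := by
    have h : (⟨x₀, hx₁, hx₂, y₀, hy₁, hy₂, hxy, hyx⟩ : H) ∈ Subtype.val ⁻¹' O := by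
      rw [hOx]; rfl
    exact h
  have hc : Continuous fun x => x₀ * x := by fun_prop
  filter_upwards [eventually_exists_inverse hJ he, hc.tendsto e (hO.mem_nhds (by rwa [hx₂]))]
    with x hx hxO h₁ h₂
  obtain ⟨y, hy₁', hy₂', hxy', hyx'⟩ := hx h₁ h₂
  have hmem : x₀ * x ∈ H := by
    refine ⟨by rw [← mul_assoc, hx₁], by rw [mul_assoc, h₂], y * y₀, by rw [← mul_assoc, hy₁'],
      by rw [mul_assoc, hy₂], ?_, ?_⟩
    · rw [mul_assoc, ← mul_assoc x, hxy', hy₁, hxy]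
    · rw [mul_assoc, ← mul_assoc y₀, hyx, h₁, hyx']
  have heq : (⟨x₀ * x, hmem⟩ : H) ∈ Subtype.val ⁻¹' O := hxO
  rw [hOx] at heq
  have hfix : x₀ * x = x₀ := congrArg Subtype.val heq
  rw [← h₁, ← hyx, mul_assoc, hfix]

/-- The subsemigroup `T` contains every idempotent `e`, as well as inverses of all elements of
`eSe` close to `e`. -/
def HasLocalInverses (T : Subsemigroup S) : Prop :=
  ∀ e : S, e * e = e → e ∈ T ∧ ∀ᶠ x in 𝓝 e, e * x = x → x * e = x →
    ∃ y ∈ T, e * y = y ∧ y * e = y ∧ x * y = e ∧ y * x = e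

variable {A : Set S} {T : Subsemigroup S}

omit [CompactSpace S] [T2Space S] in
theorem mem_of_isRegularElt (hgen : TopGen S A) (hA : A ⊆ T) (hT : HasLocalInverses T) {s : S}
    (hs : IsRegularElt s) : s ∈ T := by
  obtain ⟨t, ht⟩ := hs
  have hts : t * s * (t * s) = t * s := by rw [mul_assoc, ← mul_assoc s, ← ht]
  have hst : s * t * (s * t) = s * t := by rw [← mul_assoc, ← ht]
  have hc : Continuous fun w => t * s * t * w * (t * s) := by fun_prop
  have hlim := hc.tendsto s
  rw [mul_assoc (t * s), hts, hts] at hlim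
  obtain ⟨w, hw, hwA⟩ := mem_closure_iff_nhds.1 (hgen.symm ▸ mem_univ s :
    s ∈ closure ((Subsemigroup.closure A : Subsemigroup S) : Set S)) _
      (hlim.eventually (hT _ hts).2)
  have hwT : w ∈ T := (Subsemigroup.closure_le.2 hA) hwA
  obtain ⟨y, hyT, hy₁, hy₂, hwy, -⟩ := hw
    (by
      calc t * s * (t * s * t * w * (t * s)) = t * s * (t * s) * t * w * (t * s) := by
            simp only [mul_assoc]
        _ = _ := by rw [hts])
    (by rw [mul_assoc _ (t * s), hts])
  have hs' : s = s * t * w * y := by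
    calc s = s * (t * s) := by rw [← mul_assoc, ← ht]
      _ = s * (t * s * t * w * (t * s) * y) := by rw [hwy]
      _ = s * t * (s * t) * w * (t * s * y) := by simp only [mul_assoc]
      _ = s * t * w * y := by rw [hst, hy₁]
  rw [hs']
  exact mul_mem (mul_mem (hT _ hst).1 hwT) hyT

omit [CompactSpace S] [T2Space S] in
theorem eventually_mem_of_mul_eq_left (hgen : TopGen S A) (hA : A ⊆ T) (hT : HasLocalInverses T)
    {e : S} (he : e * e = e) : ∀ᶠ n in 𝓝 e, n * e = n → n ∈ T := by
  have hc : Continuous fun n => e * n := by fun_prop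
  have hlim := hc.tendsto e
  rw [he] at hlim
  filter_upwards [hlim.eventually (hT e he).2] with n hn hne
  obtain ⟨y, -, hy₁, hy₂, -, hy⟩ := hn (by rw [← mul_assoc, he]) (by rw [mul_assoc, hne])
  refine mem_of_isRegularElt hgen hA hT ⟨y, ?_⟩
  rw [← mul_assoc, hy₂] at hy
  rw [mul_assoc, hy, hne]

omit [CompactSpace S] [T2Space S] in
theorem eventually_mem_of_mul_eq_right (hgen : TopGen S A) (hA : A ⊆ T) (hT : HasLocalInverses T)
    {e : S} (he : e * e = e) : ∀ᶠ n in 𝓝 e, e * n = n → n ∈ T := by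
  have hc : Continuous fun n => n * e := by fun_prop
  have hlim := hc.tendsto e
  rw [he] at hlim
  filter_upwards [hlim.eventually (hT e he).2] with n hn hne
  obtain ⟨y, -, hy₁, hy₂, hy, -⟩ := hn (by rw [← mul_assoc, hne]) (by rw [mul_assoc, he])
  refine mem_of_isRegularElt hgen hA hT ⟨y, ?_⟩
  rw [mul_assoc, hy₁] at hy
  rw [hy, hne]

/-- Membership in `T` propagates from a point to the nearby points that are `J`-below it. -/
theorem eventually_mem_of_jLE (hgen : TopGen S A) (hA : A ⊆ T) (hT : HasLocalInverses T) {t : S}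
    (ht : t ∈ T) : ∀ᶠ s in 𝓝 t, jLE s t → s ∈ T := by
  have hr : ∀ ε : Sᵐᵒᵖ, ε * ε = ε → ∀ᶠ n in 𝓝 ε, n * ε = n → n.unop ∈ T := fun ε hε => by
    have h := MulOpposite.continuous_unop.tendsto ε |>.eventually
      (eventually_mem_of_mul_eq_right hgen hA hT (congrArg MulOpposite.unop hε))
    filter_upwards [h] with n hn hnε
    exact hn (congrArg MulOpposite.unop hnε)
  have hl := fun {e : S} => eventually_mem_of_mul_eq_left hgen hA hT (e := e)
  have h₁ := eventually_orbit_mem (M := Sᵐᵒᵖ) (act := fun m s => s * m.unop) (t := t) (T := T)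
    (fun m n s => by simp [mul_assoc]) (by fun_prop) fun ε hε => by
      filter_upwards [hr ε hε] with n hn hnε
      exact mul_mem ht (hn hnε)
  have h₂ := eventually_orbit_mem (M := S) (act := fun m s => m * s) (t := t) (T := T)
    (fun m n s => mul_assoc m n s) (by fun_prop) fun ε hε => by
      filter_upwards [hl hε] with n hn hnε
      exact mul_mem (hn hnε) ht
  have h₃ := eventually_orbit_mem (M := S × Sᵐᵒᵖ) (act := fun m s => m.1 * s * m.2.unop) (t := t)
    (T := T) (fun m n s => by simp [mul_assoc]) (by fun_prop) fun ε hε => by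
      filter_upwards [continuous_fst.tendsto ε |>.eventually (hl (congrArg Prod.fst hε)),
        continuous_snd.tendsto ε |>.eventually (hr _ (congrArg Prod.snd hε))] with n hn hn' hnε
      exact mul_mem (mul_mem (hn (congrArg Prod.fst hnε)) ht) (hn' (congrArg Prod.snd hnε))
  filter_upwards [h₁, h₂, h₃] with s h₁ h₂ h₃
  rintro (rfl | ⟨x, hx⟩ | ⟨x, hx⟩ | ⟨x, y, hx⟩)
  · exact ht
  · exact h₁ (.op x) hx
  · exact h₂ x hx
  · exact h₃ (x, .op y) hx

theorem exists_jLE_maximal_notMem (hgen : TopGen S A) (hA : A ⊆ T) (hT : HasLocalInverses T)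
    {s : S} (hs : s ∉ T) : ∃ m ∉ T, ∀ u ∉ T, jLE m u → jLE u m := by
  suffices h : ∀ c : Set {x // x ∉ T}, IsChain (fun x y => jLE x.1 y.1) c →
      ∃ ub : {x // x ∉ T}, ∀ a ∈ c, jLE a.1 ub.1 by
    obtain ⟨m, hm⟩ := exists_maximal_of_chains_bounded h fun h₁ h₂ => h₁.trans_s9 h₂
    exact ⟨m.1, m.2, fun u hu h => hm ⟨u, hu⟩ h⟩
  intro c hc
  obtain rfl | hne := c.eq_empty_or_nonempty
  · exact ⟨⟨s, hs⟩, by simp⟩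
  have : Nonempty c := hne.to_subtype
  let K : c → Set S := fun a => closure {x | ∃ b ∈ c, b.1 = x ∧ jLE a.1.1 x}
  obtain ⟨t, ht⟩ := IsCompact.nonempty_iInter_of_directed_nonempty_isCompact_isClosed K
    (fun a b => by
      have hmono : ∀ a b : c, jLE a.1.1 b.1.1 → K b ⊆ K a := fun a b hab =>
        closure_mono fun x ⟨z, hz, hzx, hx⟩ => ⟨z, hz, hzx, hab.trans_s9 hx⟩
      by_cases hab : a = b
      · exact ⟨a, subset_rfl, hab ▸ subset_rfl⟩
      · obtain h | h := hc a.2 b.2 (fun h => hab (Subtype.ext h))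
        · exact ⟨b, hmono a b h, subset_rfl⟩
        · exact ⟨a, subset_rfl, hmono b a h⟩)
    (fun a => ⟨a.1.1, subset_closure ⟨a.1, a.2, rfl, .inl rfl⟩⟩)
    (fun a => isClosed_closure.isCompact) (fun a => isClosed_closure)
  rw [mem_iInter] at ht
  have hle : ∀ a ∈ c, jLE a.1 t := fun a ha =>
    closure_minimal (s := {x | ∃ b ∈ c, b.1 = x ∧ jLE a.1 x}) (t := {x | jLE a.1 x})
      (fun x ⟨_, _, _, hx⟩ => hx)
      (isClosed_jLE.preimage (by fun_prop : Continuous fun x : S => (a.1, x))) (ht ⟨a, ha⟩)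
  refine ⟨⟨t, fun htT => ?_⟩, hle⟩
  obtain ⟨x, hx, b, hb, rfl, -⟩ := mem_closure_iff_nhds.1 (ht this.some) _
    (eventually_mem_of_jLE hgen hA hT htT)
  exact b.2 (hx (hle b hb))

/-- A subsemigroup containing a finite topologically generating set and having local inverses
is everything. -/
theorem eq_top_of_hasLocalInverses (hAfin : A.Finite) (hgen : TopGen S A) (hA : A ⊆ T)
    (hT : HasLocalInverses T) : T = ⊤ := by
  rw [Subsemigroup.eq_top_iff']
  by_contra! hne
  obtain ⟨s₀, hs₀⟩ := hne
  obtain ⟨s, hsT, hmax⟩ := exists_jLE_maximal_notMem hgen hA hT hs₀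
  let D₁ : Set (S × S) := {p | p.1 * p.2 = s ∧ jLE p.1 s}
  let D₂ : Set (S × S) := {p | p.1 * p.2 = s ∧ jLE p.2 s}
  have hl : ∀ u v, u * v = s → u ∉ T → (u, v) ∈ D₁ := fun u v h hu =>
    ⟨h, hmax u hu (.inr (.inl ⟨v, h.symm⟩))⟩
  have hr : ∀ u v, u * v = s → v ∉ T → (u, v) ∈ D₂ := fun u v h hv =>
    ⟨h, hmax v hv (.inr (.inr (.inl ⟨u, h.symm⟩)))⟩
  have hdisj : Disjoint D₁ D₂ := by
    rw [disjoint_left]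
    rintro ⟨u, v⟩ ⟨rfl, hu⟩ ⟨-, hv⟩
    exact hsT (mem_of_isRegularElt hgen hA hT (isRegularElt_mul hu hv))
  have hmem : ∀ u v, u * v = s → u ∉ T ∨ v ∉ T := fun u v h => by
    by_contra! huv
    exact hsT (h ▸ mul_mem huv.1 huv.2)
  have hD : ∀ {f : S × S → S}, Continuous f → IsClosed {p : S × S | p.1 * p.2 = s ∧ jLE (f p) s} :=
    fun {f} hf => (isClosed_eq (by fun_prop) continuous_const).inter
      (isClosed_jLE.preimage (by fun_prop : Continuous fun p => (f p, s)))
  obtain ⟨V₁, V₂, hV₁, hV₂, hDV₁, hDV₂, hV⟩ := SeparatedNhds.of_isCompact_isCompact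
    (hD continuous_fst).isCompact (hD continuous_snd).isCompact hdisj
  have hclV₂ : ∀ p ∈ closure V₂, p ∉ D₁ := fun p hp hp₁ =>
    disjoint_left.1 (hV.closure_right hV₁) (hDV₁ hp₁) hp
  -- Words close to `s` have a cut `u * a * v` at which `V₂` is left.
  let C₁ : Set S := ⋃ a ∈ A, (fun v => a * v) '' {v | (a, v) ∉ V₂}
  let C₂ : Set S := ⋃ a ∈ A, (fun u => u * a) '' {u | (u, a) ∈ closure V₂}
  let C₃ : Set S := ⋃ a ∈ A, (fun p : S × S => p.1 * a * p.2) ''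
    {p | (p.1, a * p.2) ∈ closure V₂ ∧ (p.1 * a, p.2) ∉ V₂}
  have hcut : ∀ w ∈ Subsemigroup.closure A, ∀ u, (u, w) ∈ V₂ → u * w ∈ C₂ ∪ C₃ := by
    refine fun w => Subsemigroup.closure_induction_cons
      (p := fun w => ∀ u, (u, w) ∈ V₂ → u * w ∈ C₂ ∪ C₃)
      (fun a ha u hu => .inl (mem_iUnion₂.2 ⟨a, ha, u, subset_closure hu, rfl⟩))
      fun a ha w _ ih u hu => ?_
    rw [← mul_assoc]
    by_cases huw : (u * a, w) ∈ V₂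
    · exact ih _ huw
    · exact .inr (mem_iUnion₂.2 ⟨a, ha, (u, w), ⟨subset_closure hu, huw⟩, rfl⟩)
  have hsub : ((Subsemigroup.closure A : Subsemigroup S) : Set S) ⊆ A ∪ C₁ ∪ (C₂ ∪ C₃) := by
    refine fun w => Subsemigroup.closure_induction_cons (p := (· ∈ A ∪ C₁ ∪ (C₂ ∪ C₃)))
      (fun a ha => .inl (.inl ha)) fun a ha w hw _ => ?_
    by_cases haw : (a, w) ∈ V₂
    · exact .inr (hcut w hw a haw)
    · exact .inl (.inr (mem_iUnion₂.2 ⟨a, ha, w, haw, rfl⟩))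
  have hC₁ : IsClosed C₁ := hAfin.isClosed_biUnion fun a _ =>
    ((hV₂.isClosed_compl.preimage (by fun_prop : Continuous fun v => (a, v))).isCompact.image
      (by fun_prop)).isClosed
  have hC₂ : IsClosed C₂ := hAfin.isClosed_biUnion fun a _ =>
    ((isClosed_closure.preimage (by fun_prop : Continuous fun u => (u, a))).isCompact.image
      (by fun_prop)).isClosed
  have hC₃ : IsClosed C₃ := hAfin.isClosed_biUnion fun a _ =>
    (((isClosed_closure.preimage (by fun_prop : Continuous fun p : S × S => (p.1, a * p.2))).inter
      (hV₂.isClosed_compl.preimage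
        (by fun_prop : Continuous fun p : S × S => (p.1 * a, p.2)))).isCompact.image
      (by fun_prop)).isClosed
  have hs : s ∈ A ∪ C₁ ∪ (C₂ ∪ C₃) :=
    closure_minimal hsub ((hAfin.isClosed.union hC₁).union (hC₂.union hC₃))
      (hgen.symm ▸ mem_univ s)
  obtain (hs | hs) | hs | hs := hs
  · exact hsT (hA hs)
  · obtain ⟨a, ha, v, hv, hav⟩ := mem_iUnion₂.1 hs
    exact hv (hDV₂ (hr a v hav ((hmem a v hav).resolve_left (not_not.2 (hA ha)))))
  · obtain ⟨a, ha, u, hu, hua⟩ := mem_iUnion₂.1 hs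
    exact hclV₂ _ hu (hl u a hua ((hmem u a hua).resolve_right (not_not.2 (hA ha))))
  · obtain ⟨a, ha, ⟨u, v⟩, ⟨huav, hnuav⟩, huv⟩ := mem_iUnion₂.1 hs
    have hv : v ∈ T := by
      by_contra hv
      exact hnuav (hDV₂ (hr _ _ huv hv))
    have hu : u ∈ T := by
      by_contra hu
      exact hclV₂ _ huav (hl _ _ (by rw [← mul_assoc]; exact huv) hu)
    obtain h | h := hmem _ _ huv
    · exact h (mul_mem hu (hA ha))
    · exact h hv

end CompactSemigroup

/-- A finitely generated profinite semigroup with finitely many regular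
`J`-classes is algebraically generated by the generators together with the group
elements; if moreover there are only countably many group elements, it is algebraically
generated by the generators together with the idempotents. -/
theorem finManyRegJ_algebraically_generated
    (S : Type) [Semigroup S] [TopologicalSpace S] (hS : IsProfiniteSgp S)
    (A : Set S) (hA : A.Finite) (hgen : TopGen S A) (hJ : FinManyRegJ S) :
    (Subsemigroup.closure (A ∪ {s : S | IsGroupElt S s}) : Set S) = Set.univ ∧
      ({s : S | IsGroupElt S s}.Countable →
        (Subsemigroup.closure (A ∪ {e : S | e * e = e}) : Set S) = Set.univ) := by
  obtain ⟨_, _, _, _⟩ := hS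
  constructor
  · rw [eq_top_of_hasLocalInverses (T := Subsemigroup.closure (A ∪ {s : S | IsGroupElt S s})) hA hgen
      (fun a ha => Subsemigroup.subset_closure (.inl ha)) fun e he => ⟨?_, ?_⟩, Subsemigroup.coe_top]
    · exact Subsemigroup.subset_closure (.inr (isGroupElt_of_inverse he he he he he he he))
    · filter_upwards [eventually_exists_inverse hJ he] with x hx h₁ h₂
      obtain ⟨y, hy₁, hy₂, hxy, hyx⟩ := hx h₁ h₂
      exact ⟨y, Subsemigroup.subset_closure
        (.inr (isGroupElt_of_inverse he hy₁ hy₂ h₁ h₂ hyx hxy)), hy₁, hy₂, hxy, hyx⟩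
  · intro hG
    have hE : ∀ e : S, e * e = e → e ∈ Subsemigroup.closure (A ∪ {e : S | e * e = e}) :=
      fun e he => Subsemigroup.subset_closure (.inr he)
    rw [eq_top_of_hasLocalInverses (T := Subsemigroup.closure (A ∪ {e : S | e * e = e})) hA hgen
      (fun a ha => Subsemigroup.subset_closure (.inl ha)) fun e he => ⟨hE e he, ?_⟩,
      Subsemigroup.coe_top]
    filter_upwards [eventually_eq_of_countable hJ hG he] with x hx h₁ h₂
    obtain rfl := hx h₁ h₂
    exact ⟨x, hE x he, he, he, he, he⟩
end

section
/- The pseudovariety A ∩ ESl, consisting of all finite aperiodic semigroups whose idempotents commute, is not locally countable: there exists an uncountable pro-(A ∩ ESl) semigroup that is topologically generated by a two-element subset. -/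
/-- A finite automaton over the alphabet `Bool` with partial deterministic transitions. -/
structure PartialAutomaton where
  Q : Type
  [fin : Finite Q]
  base : Q
  step : Q → Bool → Option Q

namespace PartialAutomaton

attribute [instance] PartialAutomaton.fin

/-- The partial action of words on states. -/
def act (A : PartialAutomaton) : A.Q → List Bool → Option A.Q
  | q, [] => some q
  | q, c :: w => (A.step q c).bind fun r => A.act r w

theorem act_append (A : PartialAutomaton) (u v : List Bool) (q : A.Q) :
    A.act q (u ++ v) = (A.act q u).bind fun r => A.act r v := by
  induction u generalizing q with
  | nil => rfl
  | cons c u ih => simp [act, ih, Option.bind_assoc]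

/-- Every letter acts as a partial injection. -/
def IsInjective (A : PartialAutomaton) : Prop :=
  ∀ c q q' r, A.step q c = some r → A.step q' c = some r → q = q'

theorem IsInjective.act {A : PartialAutomaton} (h : A.IsInjective) (w : List Bool) :
    ∀ q q' r, A.act q w = some r → A.act q' w = some r → q = q' := by
  induction w with
  | nil =>
    intro q q' r h1 h2
    simp only [PartialAutomaton.act, Option.some.injEq] at h1 h2
    rw [h1, h2]
  | cons c w ih =>
    intro q q' r h1 h2
    simp only [PartialAutomaton.act, Option.bind_eq_some_iff] at h1 h2
    obtain ⟨s, hs, hs'⟩ := h1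
    obtain ⟨t, ht, ht'⟩ := h2
    obtain rfl := ih _ _ _ hs' ht'
    exact h c _ _ _ hs ht

/-- The `n`-th power of a word. -/
def wordPow (w : List Bool) : ℕ → List Bool
  | 0 => []
  | n + 1 => wordPow w n ++ w

theorem wordPow_add (w : List Bool) (m n : ℕ) :
    wordPow w (m + n) = wordPow w m ++ wordPow w n := by
  induction n with
  | zero => simp [wordPow]
  | succ n ih => rw [← add_assoc, wordPow, ih, wordPow, List.append_assoc]

theorem le_length_wordPow {w : List Bool} (hw : w ≠ []) (n : ℕ) :
    n ≤ (wordPow w n).length := by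
  induction n with
  | zero => simp
  | succ n ih =>
    have := List.length_pos_iff.mpr hw
    simp only [wordPow, List.length_append]
    omega

/-- No word permutes states along a nontrivial cycle. -/
def IsAperiodic (A : PartialAutomaton) : Prop :=
  ∀ q w k, A.act q (wordPow w (k + 1)) = some q → A.act q w = some q

theorem act_wordPow_mul (A : PartialAutomaton) {q : A.Q} {w : List Bool} {k : ℕ}
    (h : A.act q (wordPow w k) = some q) (n : ℕ) :
    A.act q (wordPow w (k * n)) = some q := by
  induction n with
  | zero => rfl
  | succ n ih => rw [Nat.mul_succ, wordPow_add, act_append, ih, Option.bind_some, h]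

theorem IsAperiodic.act_wordPow_succ {A : PartialAutomaton} (h : A.IsAperiodic)
    (w : List Bool) (q : A.Q) :
    A.act q (wordPow w (Nat.card A.Q + 1)) = A.act q (wordPow w (Nat.card A.Q)) := by
  set n := Nat.card A.Q with hn
  cases hq : A.act q (wordPow w n) with
  | none => rw [wordPow, act_append, hq, Option.bind_none]
  | some r =>
    have hdef : ∀ i : Fin (n + 1), ∃ s, A.act q (wordPow w i) = some s := by
      intro i
      obtain ⟨d, hd⟩ := Nat.exists_eq_add_of_le (Nat.lt_succ_iff.mp i.2)
      rw [hd, wordPow_add, act_append, Option.bind_eq_some_iff] at hq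
      obtain ⟨s, hs, -⟩ := hq
      exact ⟨s, hs⟩
    choose f hf using hdef
    have hninj : ¬ Function.Injective f := by
      intro hinj
      have := Nat.card_le_card_of_injective f hinj
      simp only [Nat.card_eq_fintype_card, Fintype.card_fin] at this
      omega
    obtain ⟨i, j, hij, hlt⟩ : ∃ i j : Fin (n + 1), f i = f j ∧ i < j := by
      simp only [Function.Injective, not_forall] at hninj
      obtain ⟨i, j, hij, hne⟩ := hninj
      rcases lt_or_gt_of_ne hne with hl | hl
      · exact ⟨i, j, hij, hl⟩
      · exact ⟨j, i, hij.symm, hl⟩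
    obtain ⟨d, hd⟩ := Nat.exists_eq_add_of_lt (Fin.lt_def.mp hlt)
    have hcyc : A.act (f i) (wordPow w (d + 1)) = some (f i) := by
      have := hf j
      rw [hd, add_assoc, wordPow_add, act_append, hf i, ← hij] at this
      exact this
    have hfix : A.act (f i) (wordPow w 1) = some (f i) := by
      simpa [wordPow] using h _ _ _ hcyc
    have hall : ∀ m, A.act q (wordPow w (i + m)) = some (f i) := by
      intro m
      have := A.act_wordPow_mul hfix m
      rw [one_mul] at this
      rw [wordPow_add, act_append, hf i, Option.bind_some, this]
    obtain ⟨e, he⟩ := Nat.exists_eq_add_of_le (Nat.lt_succ_iff.mp i.2)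
    rw [← hq, he, add_assoc, hall, hall]

/-- The one-state automaton on which both letters act identically. -/
def trivial : PartialAutomaton where
  Q := Unit
  base := ()
  step _ _ := some ()

/-- The decoder of the substitution fixing `false` and sending `true` to `1011` (for `i = false`)
or `1101` (for `i = true`): the state is the position in the block being read. -/
def decode (i : Bool) : Fin 4 → Bool → Option (List Bool × Fin 4)
  | 0, true => some ([], 1)
  | 0, false => some ([false], 0)
  | 1, c => if c = i then some ([], 2) else none
  | 2, c => if c = i then none else some ([], 3)
  | 3, true => some ([true], 0)
  | 3, false => none

/-- The extension of `decode` to words. -/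
def decodeWord (i : Bool) : Fin 4 → List Bool → Option (List Bool × Fin 4)
  | j, [] => some ([], j)
  | j, c :: w => (decode i j c).bind fun x => (decodeWord i x.2 w).map fun y => (x.1 ++ y.1, y.2)

theorem decodeWord_append (i : Bool) (u v : List Bool) (j : Fin 4) :
    decodeWord i j (u ++ v) = (decodeWord i j u).bind fun x =>
      (decodeWord i x.2 v).map fun y => (x.1 ++ y.1, y.2) := by
  induction u generalizing j with
  | nil => simp [decodeWord]
  | cons c u ih =>
    cases h : decode i j c with
    | none => simp [decodeWord, h]
    | some x =>
      simp only [List.cons_append, decodeWord, h, Option.bind_some, ih]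
      cases h' : decodeWord i x.2 u with
      | none => simp
      | some y => simp [Function.comp_def]

theorem decodeWord_wordPow {i : Bool} {j : Fin 4} {w v : List Bool}
    (h : decodeWord i j w = some (v, j)) (n : ℕ) :
    decodeWord i j (wordPow w n) = some (wordPow v n, j) := by
  induction n with
  | zero => rfl
  | succ n ih => simp [wordPow, decodeWord_append, ih, h]

set_option maxRecDepth 100000 in
theorem decodeWord_sync_six : ∀ (i : Bool) (j j' : Fin 4) (c₁ c₂ c₃ c₄ c₅ c₆ : Bool),
    (decodeWord i j [c₁, c₂, c₃, c₄, c₅, c₆]).isSome →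
    (decodeWord i j' [c₁, c₂, c₃, c₄, c₅, c₆]).isSome → j = j' := by
  decide

theorem decodeWord_sync {i : Bool} {j j' : Fin 4} {w : List Bool} (hw : 6 ≤ w.length)
    (h : decodeWord i j w ≠ none) (h' : decodeWord i j' w ≠ none) : j = j' := by
  obtain ⟨c₁, c₂, c₃, c₄, c₅, c₆, t, rfl⟩ :
      ∃ c₁ c₂ c₃ c₄ c₅ c₆ t, w = [c₁, c₂, c₃, c₄, c₅, c₆] ++ t := by
    match w, hw with
    | c₁ :: c₂ :: c₃ :: c₄ :: c₅ :: c₆ :: t, _ => exact ⟨c₁, c₂, c₃, c₄, c₅, c₆, t, rfl⟩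
  have key : ∀ l, decodeWord i l ([c₁, c₂, c₃, c₄, c₅, c₆] ++ t) ≠ none →
      (decodeWord i l [c₁, c₂, c₃, c₄, c₅, c₆]).isSome := by
    intro l hl
    rw [← Option.ne_none_iff_isSome]
    intro hn
    rw [decodeWord_append, hn] at hl
    exact hl rfl
  exact decodeWord_sync_six i j j' c₁ c₂ c₃ c₄ c₅ c₆ (key _ h) (key _ h')

/-- The automaton in which each edge labelled `true` of `A` is replaced by a path. -/
abbrev extend (i : Bool) (A : PartialAutomaton) : PartialAutomaton where
  Q := A.Q × Fin 4
  base := (A.base, 0)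
  step x c := (decode i x.2 c).bind fun y => (A.act x.1 y.1).map fun q => (q, y.2)

theorem act_extend (i : Bool) (A : PartialAutomaton) (w : List Bool) (q : A.Q) (j : Fin 4) :
    (extend i A).act (q, j) w =
      (decodeWord i j w).bind fun y => (A.act q y.1).map fun r => (r, y.2) := by
  induction w generalizing q j with
  | nil => rfl
  | cons c w ih =>
    change ((decode i j c).bind fun y => (A.act q y.1).map fun q => (q, y.2)).bind
      (fun x => (extend i A).act x w) = _
    simp only [decodeWord]
    cases h : decode i j c with
    | none => rfl
    | some x =>
      simp only [Option.bind_some]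
      cases h1 : A.act q x.1 with
      | none =>
        cases h2 : decodeWord i x.2 w with
        | none => rfl
        | some y => simp [act_append, h1]
      | some r =>
        simp only [Option.map_some, Option.bind_some, ih]
        cases h2 : decodeWord i x.2 w with
        | none => rfl
        | some y => simp [act_append, h1]

theorem IsInjective.extend {A : PartialAutomaton} (h : A.IsInjective) (i : Bool) :
    (extend i A).IsInjective := by
  rintro c ⟨q, j⟩ ⟨q', j'⟩ ⟨r, l⟩ h1 h2
  have h' := h.act
  simp only [PartialAutomaton.extend, Option.bind_eq_some_iff, Option.map_eq_some_iff,
    Prod.mk.injEq] at h1 h2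
  obtain ⟨⟨v, m⟩, hd, r1, hr, rfl, rfl⟩ := h1
  obtain ⟨⟨v', m'⟩, hd', r2, hr', rfl, hm⟩ := h2
  simp only at hm hr hr' hd hd'
  subst hm
  have key : ∀ (i c : Bool) (j j' : Fin 4), ∀ x ∈ decode i j c, ∀ x' ∈ decode i j' c,
      x'.2 = x.2 → j = j' ∧ x.1 = x'.1 := by
    decide
  obtain ⟨rfl, hv⟩ := key i c j j' _ hd _ hd' rfl
  simp only at hv
  subst hv
  rw [h' _ _ _ _ hr hr']

theorem decodeWord_ne_none_of_act_extend {i : Bool} {A : PartialAutomaton} {w : List Bool}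
    {x : (extend i A).Q} (h : (extend i A).act x w ≠ none) : decodeWord i x.2 w ≠ none := by
  obtain ⟨q, j⟩ := x
  intro hn
  apply h
  rw [act_extend, hn]
  rfl

theorem IsAperiodic.extend {A : PartialAutomaton} (h : A.IsAperiodic) (i : Bool) :
    (extend i A).IsAperiodic := by
  intro x w k hk
  rcases eq_or_ne w [] with rfl | hw
  · rfl
  have hlong := act_wordPow_mul _ hk 7
  obtain ⟨M, hM⟩ : ∃ M, (k + 1) * 7 = M + 1 := ⟨7 * k + 6, by ring⟩
  have hM6 : 6 ≤ M := by omega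
  have hlen := hM6.trans (le_length_wordPow hw M)
  rw [hM] at hlong
  have hx : (PartialAutomaton.extend i A).act x (wordPow w M) ≠ none := by
    intro hn
    rw [wordPow_add, act_append, hn] at hlong
    cases hlong
  rw [add_comm, wordPow_add, act_append, Option.bind_eq_some_iff] at hlong
  obtain ⟨y, hy, hy'⟩ := hlong
  simp only [wordPow, List.nil_append] at hy
  have hjj : x.2 = y.2 := decodeWord_sync hlen (decodeWord_ne_none_of_act_extend hx)
    (decodeWord_ne_none_of_act_extend (by rw [hy']; exact Option.some_ne_none _))
  obtain ⟨q, j⟩ := x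
  obtain ⟨q', j'⟩ := y
  obtain rfl : j = j' := hjj
  rw [act_extend, Option.bind_eq_some_iff] at hy
  obtain ⟨⟨v, l⟩, hv, hmap⟩ := hy
  simp only [Option.map_eq_some_iff, Prod.mk.injEq] at hmap
  obtain ⟨r, hr, rfl, rfl⟩ := hmap
  rw [act_extend, decodeWord_wordPow hv, Option.bind_some] at hk
  simp only [Option.map_eq_some_iff, Prod.mk.injEq, and_true, exists_eq_right] at hk
  rw [act_extend, hv, Option.bind_some, h q v k hk]
  rfl

/-- The substitution decoded by `decode i`. -/
def subst (i : Bool) : List Bool → List Bool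
  | [] => []
  | false :: w => false :: subst i w
  | true :: w => true :: i :: (!i) :: true :: subst i w

theorem decodeWord_subst (i : Bool) (w : List Bool) :
    decodeWord i 0 (subst i w) = some (w, 0) := by
  induction w with
  | nil => rfl
  | cons c w ih =>
    cases c <;> cases i <;> simp [subst, decodeWord, decode, ih]

theorem act_extend_subst (i : Bool) (A : PartialAutomaton) (w : List Bool) :
    (extend i A).act (extend i A).base (subst i w) = some (extend i A).base ↔
      A.act A.base w = some A.base := by
  change (extend i A).act (A.base, 0) _ = some (A.base, 0) ↔ _
  rw [act_extend, decodeWord_subst]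
  cases h : A.act A.base w <;> simp [h]

/-- The automaton obtained by iterated extension. -/
def tower : List Bool → PartialAutomaton
  | [] => trivial
  | i :: p => extend i (tower p)

/-- The image of the letter `true` under an iterated substitution. -/
def iterSubst : List Bool → List Bool
  | [] => [true]
  | i :: p => subst i (iterSubst p)

theorem tower_isInjective (p : List Bool) : (tower p).IsInjective := by
  induction p with
  | nil => intro _ _ _ _ _ _; rfl
  | cons i p ih => exact ih.extend i

theorem act_trivial (w : List Bool) (q : trivial.Q) : trivial.act q w = some q := by
  induction w generalizing q with
  | nil => rfl
  | cons c w ih => exact ih _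

theorem tower_isAperiodic (p : List Bool) : (tower p).IsAperiodic := by
  induction p with
  | nil => intro q w _ _; exact act_trivial w q
  | cons i p ih => exact ih.extend i

theorem iterSubst_eq_cons (p : List Bool) : ∃ t, iterSubst p = true :: t := by
  induction p with
  | nil => exact ⟨[], rfl⟩
  | cons i p ih =>
    obtain ⟨t, ht⟩ := ih
    exact ⟨_, by rw [iterSubst, ht, subst]⟩

theorem tower_act_iterSubst (p r : List Bool) :
    (tower p).act (tower p).base (iterSubst (p ++ r)) = some (tower p).base := by
  induction p with
  | nil => exact act_trivial _ _
  | cons i p ih => exact (act_extend_subst _ _ _).mpr ih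

theorem tower_act_iterSubst_ne (p : List Bool) {i i' : Bool} (hi : i' ≠ i) (r : List Bool) :
    (tower (p ++ [i])).act (tower (p ++ [i])).base (iterSubst (p ++ i' :: r)) ≠
      some (tower (p ++ [i])).base := by
  induction p with
  | nil =>
    obtain ⟨t, ht⟩ := iterSubst_eq_cons r
    simp only [List.nil_append, tower, iterSubst, ht, subst]
    change (extend i trivial).act (trivial.base, 0) _ ≠ _
    rw [act_extend]
    have : decodeWord i 0 (true :: i' :: (!i') :: true :: subst i' t) = none := by
      simp [decodeWord, decode, hi]
    rw [this]
    exact (Option.some_ne_none _).symm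
  | cons j p ih =>
    intro h
    exact ih ((act_extend_subst _ _ _).mp h)

/-- Partial maps on the states of `A` induced by nonempty words. -/
def Transition (A : PartialAutomaton) : Type :=
  {f : A.Q → Option A.Q // ∃ w : List Bool, w ≠ [] ∧ f = fun q => A.act q w}

instance (A : PartialAutomaton) : Finite A.Transition :=
  Subtype.finite

/-- The partial map induced by a nonempty word. -/
def ofWord (A : PartialAutomaton) (w : List Bool) (hw : w ≠ []) : A.Transition :=
  ⟨fun q => A.act q w, w, hw, rfl⟩

instance (A : PartialAutomaton) : Semigroup A.Transition where
  mul f g := ⟨fun q => (f.1 q).bind g.1, by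
    obtain ⟨_, u, hu, rfl⟩ := f
    obtain ⟨_, v, hv, rfl⟩ := g
    exact ⟨u ++ v, by simp [hu], by funext q; rw [act_append]⟩⟩
  mul_assoc f g h := Subtype.ext (funext fun q => Option.bind_assoc _ _ _)

theorem Transition.mul_val {A : PartialAutomaton} (f g : A.Transition) (q : A.Q) :
    (f * g).1 q = (f.1 q).bind g.1 := rfl

theorem ofWord_mul (A : PartialAutomaton) {u v : List Bool} (hu : u ≠ []) (hv : v ≠ []) :
    A.ofWord u hu * A.ofWord v hv = A.ofWord (u ++ v) (by simp [hu]) :=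
  Subtype.ext (funext fun q => (A.act_append u v q).symm)

theorem spow_val {A : PartialAutomaton} {f : A.Transition} {w : List Bool}
    (hf : f.1 = fun q => A.act q w) (n : ℕ) (q : A.Q) :
    (spow f n).1 q = A.act q (wordPow w (n + 1)) := by
  induction n with
  | zero => simp [spow, hf, wordPow]
  | succ n ih => rw [spow, Transition.mul_val, ih, hf, ← act_append, ← wordPow]

/-- The transition semigroup as a bundled finite semigroup. -/
def sgp (A : PartialAutomaton) : FinSgp := FinSgp.mk A.Transition

theorem sgp_mem_AESl {A : PartialAutomaton} (hi : A.IsInjective) (ha : A.IsAperiodic) :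
    A.sgp ∈ AESl := by
  constructor
  · refine ⟨Nat.card A.Q, fun (x : A.Transition) => ?_⟩
    obtain ⟨w, -, hw⟩ := x.2
    refine Subtype.ext (funext fun q => ?_)
    have h := ha.act_wordPow_succ w q
    change (spow x (Nat.card A.Q + 1)).1 q = (spow x (Nat.card A.Q)).1 q
    rw [spow_val hw, spow_val hw, wordPow, act_append, h, ← act_append, ← wordPow, ← h]
  · intro (e : A.Transition) (f : A.Transition) (he : e * e = e) (hf : f * f = f)
    have key : ∀ e : A.Transition, e * e = e → ∀ q r, e.1 q = some r → q = r := by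
      intro e he q r hr
      obtain ⟨w, -, hw⟩ := e.2
      have h := Transition.mul_val e e q
      rw [he, hr, Option.bind_some, hw] at h
      rw [hw] at hr
      exact hi.act w _ _ _ hr h.symm
    refine Subtype.ext (funext fun q => ?_)
    change (e * f).1 q = (f * e).1 q
    rw [Transition.mul_val, Transition.mul_val]
    have he' := key e he q
    have hf' := key f hf q
    cases h1 : e.1 q with
    | none =>
      cases h2 : f.1 q with
      | none => rfl
      | some s => obtain rfl := hf' s h2; exact h1.symm
    | some r =>
      obtain rfl := he' r h1
      cases h2 : f.1 q with
      | none => exact h2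
      | some s => obtain rfl := hf' s h2; simp [h1, h2]

/-- The product of the transition semigroups of all towers. -/
abbrev TowerProd : Type := ∀ p : List Bool, (tower p).sgp.carrier

/-- The diagonal image of a nonempty word. -/
def diag (w : List Bool) (hw : w ≠ []) : TowerProd := fun p => (tower p).ofWord w hw

instance (T : FinSgp) : ContinuousMul T.carrier := ⟨continuous_of_discreteTopology⟩

/-- The closed subsemigroup generated by the two letters. -/
def towerLimit : Subsemigroup TowerProd :=
  (Subsemigroup.closure {diag [true] (by simp), diag [false] (by simp)}).topologicalClosure

theorem diag_mem_closure (w : List Bool) (hw : w ≠ []) :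
    diag w hw ∈ Subsemigroup.closure {diag [true] (by simp), diag [false] (by simp)} := by
  induction w with
  | nil => exact absurd rfl hw
  | cons c w ih =>
    have hc : diag [c] (by simp) ∈
        Subsemigroup.closure {diag [true] (by simp), diag [false] (by simp)} := by
      apply Subsemigroup.subset_closure
      cases c <;> simp
    rcases eq_or_ne w [] with rfl | hw'
    · exact hc
    · have : diag (c :: w) hw = diag [c] (by simp) * diag w hw' := by
        funext p
        exact ((tower p).ofWord_mul (u := [c]) (by simp) hw').symm
      rw [this]
      exact mul_mem hc (ih hw')

/-- The element of `towerLimit` represented by a nonempty word. -/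
def limitWord (w : List Bool) (hw : w ≠ []) : towerLimit :=
  ⟨diag w hw, Subsemigroup.le_topologicalClosure _ (diag_mem_closure w hw)⟩

instance : CompactSpace towerLimit :=
  isCompact_iff_compactSpace.mp (Subsemigroup.isClosed_topologicalClosure _).isCompact

theorem towerLimit_isProV : IsProV AESl towerLimit := by
  refine ⟨⟨inferInstance, inferInstance, inferInstance, inferInstance⟩, fun x y hxy => ?_⟩
  obtain ⟨p, hp⟩ : ∃ p, x.1 p ≠ y.1 p := by
    by_contra! h
    exact hxy (Subtype.ext (funext h))
  refine ⟨(tower p).sgp,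
    { toFun := fun z => z.1 p
      map_mul' := fun _ _ => rfl },
    sgp_mem_AESl (tower_isInjective p) (tower_isAperiodic p),
    (continuous_apply p).comp continuous_subtype_val, ?_, hp⟩
  rintro ⟨f, w, hw, rfl⟩
  exact ⟨limitWord w hw, rfl⟩

theorem topGen_towerLimit :
    TopGen towerLimit {limitWord [true] (by simp), limitWord [false] (by simp)} := by
  refine Set.eq_univ_of_forall fun x => ?_
  rw [closure_subtype]
  have hx : x.1 ∈ closure ((Subsemigroup.closure
    {diag [true] (by simp), diag [false] (by simp)} : Subsemigroup TowerProd) :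
      Set TowerProd) := x.2
  convert hx using 2
  change (Subtype.val : towerLimit → TowerProd) '' _ = _
  rw [show (Subtype.val : towerLimit → TowerProd) = MulMemClass.subtype towerLimit from rfl,
    ← Subsemigroup.coe_map, MulHom.map_mclosure, Set.image_pair]
  rfl

theorem limitWord_true_ne_false :
    limitWord [true] (by simp) ≠ limitWord [false] (by simp) := by
  intro h
  have h1 := congrFun (congrArg Subtype.val (congrFun (congrArg Subtype.val h) [true]))
    (trivial.base, (0 : Fin 4))
  revert h1
  change (extend true trivial).act (trivial.base, 0) [true] ≠
    (extend true trivial).act (trivial.base, 0) [false]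
  rw [act_extend, act_extend]
  simp [decodeWord, decode, act_trivial]

/-- The prefix of length `n` of an infinite binary sequence. -/
def initial (ε : ℕ → Bool) (n : ℕ) : List Bool := (List.range n).map ε

theorem initial_add (ε : ℕ → Bool) (n d : ℕ) : ∃ r, initial ε (n + d) = initial ε n ++ r :=
  ⟨_, by rw [initial, List.range_add, List.map_append]; rfl⟩

theorem iterSubst_ne_nil (p : List Bool) : iterSubst p ≠ [] := by
  obtain ⟨t, ht⟩ := iterSubst_eq_cons p
  simp [ht]

/-- A limit point of the words obtained by iterating substitutions along `ε`. -/
noncomputable def limitPoint (ε : ℕ → Bool) : towerLimit :=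
  ((Filter.hyperfilter ℕ).map
    fun n => limitWord (iterSubst (initial ε n)) (iterSubst_ne_nil _)).lim

theorem frequently_limitPoint_apply_eq (ε : ℕ → Bool) (p : List Bool) :
    ∃ᶠ n in Filter.atTop, (limitPoint ε).1 p =
      (tower p).ofWord (iterSubst (initial ε n)) (iterSubst_ne_nil _) := by
  have h : Filter.Tendsto
      (fun n => limitWord (iterSubst (initial ε n)) (iterSubst_ne_nil _))
      (Filter.hyperfilter ℕ) (nhds (limitPoint ε)) := Ultrafilter.le_nhds_lim _
  have hc : Continuous fun x : towerLimit => x.1 p :=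
    (continuous_apply p).comp continuous_subtype_val
  have h2 := (hc.tendsto _).comp h
  rw [nhds_discrete, Filter.tendsto_pure] at h2
  refine Filter.Frequently.filter_mono (h2.mono fun n hn => hn.symm).frequently ?_
  exact Nat.hyperfilter_le_atTop

theorem limitPoint_injective : Function.Injective limitPoint := by
  intro ε ε' h
  by_contra hne
  have hex : ∃ n, ε n ≠ ε' n := by
    by_contra! h'
    exact hne (funext h')
  classical
  obtain ⟨n, hn, hmin⟩ : ∃ n, ε n ≠ ε' n ∧ ∀ m < n, ε m = ε' m :=
    ⟨Nat.find hex, Nat.find_spec hex, fun m hm => not_not.mp (Nat.find_min hex hm)⟩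
  have hpre : initial ε' n = initial ε n :=
    List.map_congr_left fun m hm => (hmin m (List.mem_range.mp hm)).symm
  have hsucc : ∀ δ : ℕ → Bool, initial δ (n + 1) = initial δ n ++ [δ n] := fun δ => by
    simp [initial, List.range_succ]
  set p := initial ε n ++ [ε n] with hp
  obtain ⟨m, hm, hmn⟩ := ((frequently_limitPoint_apply_eq ε p).and_eventually
    (Filter.eventually_ge_atTop (n + 1))).exists
  obtain ⟨m', hm', hmn'⟩ := ((frequently_limitPoint_apply_eq ε' p).and_eventually
    (Filter.eventually_ge_atTop (n + 1))).exists
  obtain ⟨d, rfl⟩ := Nat.exists_eq_add_of_le hmn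
  obtain ⟨d', rfl⟩ := Nat.exists_eq_add_of_le hmn'
  obtain ⟨r, hr⟩ := initial_add ε (n + 1) d
  obtain ⟨r', hr'⟩ := initial_add ε' (n + 1) d'
  rw [← h, hm] at hm'
  have hbase := congrFun (congrArg Subtype.val hm') (tower p).base
  change (tower p).act _ _ = (tower p).act _ _ at hbase
  rw [hr, hr', hsucc, hsucc, ← hp, tower_act_iterSubst, hpre, List.append_assoc] at hbase
  exact tower_act_iterSubst_ne (initial ε n) (Ne.symm hn) r' hbase.symm

theorem not_countable_towerLimit : ¬ Countable towerLimit := by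
  intro h
  have : Countable (ℕ → Bool) := limitPoint_injective.countable
  refine (Cardinal.mk_le_aleph0_iff.mpr this).not_gt ?_
  have hlt := Cardinal.cantor Cardinal.aleph0
  rwa [← Cardinal.mk_bool, ← Cardinal.mk_nat, Cardinal.power_def, Cardinal.mk_nat] at hlt

end PartialAutomaton

/-- The pseudovariety `A ∩ ESl` of finite aperiodic semigroups with
commuting idempotents is not locally countable: there is an uncountable
pro-(A ∩ ESl) semigroup topologically generated by a two-element subset. -/
theorem AESl_not_locallyCountable :
    ¬ PVLocallyCountable AESl ∧
      ∃ S : TopSgp, IsProV AESl S.carrier ∧ ¬ Countable S.carrier ∧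
        ∃ x y : S.carrier, x ≠ y ∧ TopGen S.carrier {x, y} := by
  refine ⟨fun h => ?_, TopSgp.mk PartialAutomaton.towerLimit,
    PartialAutomaton.towerLimit_isProV, PartialAutomaton.not_countable_towerLimit,
    _, _, PartialAutomaton.limitWord_true_ne_false, PartialAutomaton.topGen_towerLimit⟩
  have hc := h _ PartialAutomaton.towerLimit_isProV
    {PartialAutomaton.limitWord [true] (by simp), PartialAutomaton.limitWord [false] (by simp)}
    (Set.toFinite _)
  rw [PartialAutomaton.topGen_towerLimit, Set.countable_univ_iff] at hc
  exact PartialAutomaton.not_countable_towerLimit hc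
end
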